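/- Convergence of Algorithm II: assume m ≥ 3, each x_i = (1, z_iᵀ)ᵀ with z_i ∈ ℝ^{m−1}, and X has full rank m. Let w^(0) ∈ Ω and let w^(t) be the sequence generated by the Algorithm II update w_i^(t) = w_i^(t−1)·(x_iᵀ M(w^(t−1))^{-1} x_i − 1)/(m − 1). Then every limit point of the sequence w^(t) is a global maximizer of det M(w) over Ω₊, and det M(w^(t)) increases monotonically to sup_{w ∈ Ω₊} det M(w) as t → ∞. -/

import Mathlib

open Matrix Filter

/-- The information matrix `M(w) = ∑ i, w_i x_i x_iᵀ`. -/
noncomputable def Mmat {n m : ℕ} (x : Fin n → Fin m → ℝ) (w : Fin n → ℝ) :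
    Matrix (Fin m) (Fin m) ℝ :=
  ∑ i, w i • Matrix.vecMulVec (x i) (x i)

/-- `Ω₊`: the set of weight vectors in the closed simplex whose information matrix is
positive definite. -/
def OmegaPlus {n m : ℕ} (x : Fin n → Fin m → ℝ) : Set (Fin n → ℝ) :=
  {w | (∀ i, 0 ≤ w i) ∧ ∑ i, w i = 1 ∧ (Mmat x w).PosDef}

/-!
The affine functions on the design points form a finite-dimensional space; let `K_w` be the
reproducing kernel of its mean-zero part in `L²(w)`, so that one step of Algorithm II multiplies
`w i` by `K_w i i / (m - 1)`.

Monotonicity: if `w'` is the weight vector after one step and `A = M(w)`, then suitable vectors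
`b i` satisfy `det (∑ i, w' i • b i (x i)ᵀ) = 1` and `tr (A * ∑ i, w' i • b i (b i)ᵀ) ≤ m`.
A determinantal Cauchy-Schwarz inequality and AM-GM then give `det A ≤ det M(w')`.

Convergence: let `v` maximize `det M`. Then `K_v i i ≤ m - 1`, with equality on the support of `v`.
Along the orbit `∑ i, v i * log (w i)` is at most `0`, and its increments are
`∑ i, v i * log (K_w i i / (m - 1))`. If `μ i` and `T i` denote the `w`-mean and the `w`-variance
of the function `K_v i`, then Cauchy-Schwarz in `L²(w)` gives `(m - 1 - μ i) ^ 2 ≤ K_w i i * T i`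
on the support of `v`, while `∑ i, v i * μ i = 0` and `∑ i, v i * (T i + μ i ^ 2) ≤ m - 1`.
Bounding `log (m - 1 - μ i)` below by a chord and `log (T i)` above by a tangent shows that the
increments are nonnegative and, as `m - 1 > 1`, vanish only if `K_w i i = m - 1` on the support of
`v`, in which case AM-GM gives `det M(v) ≤ det M(w)`. The increments tend to `0`, so this is the
case at every cluster point.
-/

section PosSemidef

variable {ι κ : Type*} [Fintype ι]

lemma posSemidef_transpose_mul_mul [Finite κ] {W : Matrix ι ι ℝ} (hW : W.PosSemidef)
    (X : Matrix ι κ ℝ) : (Xᵀ * W * X).PosSemidef := by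
  simpa only [conjTranspose_eq_transpose_of_trivial] using hW.conjTranspose_mul_mul_same X

variable [Fintype κ]

/-- Schur complement of the positive semidefinite block matrix `[X B]ᵀ W [X B]`. -/
lemma posSemidef_sub_mul_inv_mul [DecidableEq κ] {W : Matrix ι ι ℝ} (hW : W.PosSemidef)
    {X : Matrix ι κ ℝ} (hX : (Xᵀ * W * X).PosDef) (B : Matrix ι κ ℝ) :
    (Bᵀ * W * B - Bᵀ * W * X * (Xᵀ * W * X)⁻¹ * (Bᵀ * W * X)ᵀ).PosSemidef := by
  have hWT : Wᵀ = W := by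
    simpa only [conjTranspose_eq_transpose_of_trivial] using hW.isHermitian.eq
  have hBX : (Bᵀ * W * X)ᵀ = Xᵀ * W * B := by
    simp only [transpose_mul, transpose_transpose, hWT, Matrix.mul_assoc]
  have hblock := posSemidef_transpose_mul_mul hW (fromCols X B)
  have := hX.isUnit.invertible
  rw [transpose_fromCols, fromRows_mul, fromRows_mul_fromCols, ← hBX] at hblock
  have hschur := (hX.fromBlocks₁₁ (Bᵀ * W * X)ᵀ (Bᵀ * W * B)).1
  simp only [conjTranspose_eq_transpose_of_trivial, transpose_transpose] at hschur
  exact hschur hblock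

lemma exists_posSemidef_trace_eq_det_eq [DecidableEq κ] {A B : Matrix κ κ ℝ} (hA : A.PosSemidef)
    (hB : B.PosSemidef) :
    ∃ P : Matrix κ κ ℝ, P.PosSemidef ∧ P.trace = (A * B).trace ∧ P.det = A.det * B.det := by
  obtain ⟨C, rfl⟩ : ∃ C : Matrix κ κ ℝ, A = Cᴴ * C := by
    open scoped MatrixOrder in
    exact CStarAlgebra.nonneg_iff_eq_star_mul_self.mp hA.nonneg
  refine ⟨C * B * Cᴴ, hB.mul_mul_conjTranspose_same C, ?_, ?_⟩
  · rw [trace_mul_comm, ← Matrix.mul_assoc]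
  · simp only [det_mul]
    ring

lemma trace_mul_nonneg_of_posSemidef {A B : Matrix κ κ ℝ} (hA : A.PosSemidef)
    (hB : B.PosSemidef) : 0 ≤ (A * B).trace := by
  classical
  obtain ⟨P, hP, htrace, -⟩ := exists_posSemidef_trace_eq_det_eq hA hB
  exact htrace ▸ hP.trace_nonneg

variable [DecidableEq κ]

lemma det_le_one_of_trace_le_card {P : Matrix κ κ ℝ} (hP : P.PosSemidef)
    (htrace : P.trace ≤ Fintype.card κ) : P.det ≤ 1 := by
  have hsum : ∑ i, (hP.isHermitian.eigenvalues i - 1) ≤ 0 := by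
    rw [hP.isHermitian.trace_eq_sum_eigenvalues] at htrace
    simpa [Finset.sum_sub_distrib] using htrace
  calc P.det = ∏ i, hP.isHermitian.eigenvalues i := hP.isHermitian.det_eq_prod_eigenvalues
    _ ≤ ∏ i, Real.exp (hP.isHermitian.eigenvalues i - 1) :=
        Finset.prod_le_prod (fun i _ => hP.eigenvalues_nonneg i) fun i _ => by
          linarith [Real.add_one_le_exp (hP.isHermitian.eigenvalues i - 1)]
    _ = Real.exp (∑ i, (hP.isHermitian.eigenvalues i - 1)) := (Real.exp_sum _ _).symm
    _ ≤ 1 := Real.exp_le_one_iff.2 hsum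

lemma det_mul_det_le_one_of_trace_mul_le_card {A B : Matrix κ κ ℝ} (hA : A.PosSemidef)
    (hB : B.PosSemidef) (htrace : (A * B).trace ≤ Fintype.card κ) : A.det * B.det ≤ 1 := by
  obtain ⟨P, hP, hPtrace, hPdet⟩ := exists_posSemidef_trace_eq_det_eq hA hB
  exact hPdet ▸ det_le_one_of_trace_le_card hP (hPtrace ▸ htrace)

lemma posDef_transpose_mul_mul_of_det_ne_zero {W : Matrix ι ι ℝ} (hW : W.PosSemidef)
    {X B : Matrix ι κ ℝ} (hdet : (Bᵀ * W * X).det ≠ 0) : (Xᵀ * W * X).PosDef := by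
  have hpsd := posSemidef_transpose_mul_mul hW X
  refine .of_dotProduct_mulVec_pos hpsd.isHermitian fun q hq =>
    (hpsd.dotProduct_mulVec_nonneg q).lt_of_ne' fun h0 => hq ?_
  have hquad : star (X *ᵥ q) ⬝ᵥ W *ᵥ (X *ᵥ q) = 0 := by
    rw [← h0, ← mulVec_mulVec, ← mulVec_mulVec, star_trivial, star_trivial, dotProduct_mulVec q,
      vecMul_transpose]
  have hker := (hW.dotProduct_mulVec_zero_iff _).1 hquad
  refine eq_zero_of_mulVec_eq_zero hdet ?_
  rw [← mulVec_mulVec, ← mulVec_mulVec, hker, mulVec_zero]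

lemma det_mul_sq_det_le_det {A : Matrix κ κ ℝ} (hA : A.PosSemidef) {W : Matrix ι ι ℝ}
    (hW : W.PosSemidef) {X : Matrix ι κ ℝ} (hX : (Xᵀ * W * X).PosDef) {B : Matrix ι κ ℝ}
    (htrace : (A * (Bᵀ * W * B)).trace ≤ Fintype.card κ) :
    A.det * (Bᵀ * W * X).det ^ 2 ≤ (Xᵀ * W * X).det := by
  set G := Bᵀ * W * X
  have hproj : (G * (Xᵀ * W * X)⁻¹ * Gᵀ).PosSemidef := by
    simpa only [conjTranspose_eq_transpose_of_trivial] using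
      hX.inv.posSemidef.mul_mul_conjTranspose_same G
  have hschur := trace_mul_nonneg_of_posSemidef hA (posSemidef_sub_mul_inv_mul hW hX B)
  rw [Matrix.mul_sub, trace_sub, sub_nonneg] at hschur
  have hdet := det_mul_det_le_one_of_trace_mul_le_card hA hproj (hschur.trans htrace)
  rw [det_mul, det_mul, det_transpose, det_nonsing_inv, Ring.inverse_eq_inv'] at hdet
  rw [← div_le_one hX.det_pos]
  exact le_of_eq_of_le (by ring) hdet

lemma trace_nonpos_of_det_one_add_smul_le_one {A : Matrix κ κ ℝ}
    (h : ∀ ε ∈ Set.Ioo (0 : ℝ) 1, (1 + ε • A).det ≤ 1) : A.trace ≤ 0 := by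
  set p := (det (1 + (Polynomial.X : Polynomial ℝ) • A.map Polynomial.C)).divX.divX
  have hlim : Tendsto (fun ε => A.trace + p.eval ε * ε) (nhdsWithin 0 (Set.Ioi 0))
      (nhds A.trace) := by
    have hcont : Continuous fun ε => A.trace + p.eval ε * ε := by fun_prop
    simpa using hcont.continuousWithinAt (s := Set.Ioi 0) (x := 0) |>.tendsto
  refine le_of_tendsto hlim ?_
  filter_upwards [Ioo_mem_nhdsGT one_pos] with ε hε
  have hdet := h ε hε
  rw [det_one_add_smul] at hdet
  have hmul : ε * (A.trace + p.eval ε * ε) ≤ ε * 0 := by linarith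
  exact le_of_mul_le_mul_left hmul hε.1

end PosSemidef

section WeightedSum

variable {ι : Type*} [Fintype ι] {v f g : ι → ℝ}

lemma sum_mul_le_sum_mul_of_support (hv : ∀ i, 0 ≤ v i) (hfg : ∀ i, 0 < v i → f i ≤ g i) :
    ∑ i, v i * f i ≤ ∑ i, v i * g i :=
  Finset.sum_le_sum fun i _ => (hv i).eq_or_lt.elim (fun h0 => by simp [← h0])
    fun hi => mul_le_mul_of_nonneg_left (hfg i hi) hi.le

lemma eq_on_support_of_sum_mul_le_sum_mul (hv : ∀ i, 0 ≤ v i) (hfg : ∀ i, 0 < v i → f i ≤ g i)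
    (hsum : ∑ i, v i * g i ≤ ∑ i, v i * f i) : ∀ i, 0 < v i → f i = g i := by
  have hle : ∀ i ∈ Finset.univ, v i * f i ≤ v i * g i := fun i _ =>
    (hv i).eq_or_lt.elim (fun h0 => by simp [← h0])
      fun hi => mul_le_mul_of_nonneg_left (hfg i hi) hi.le
  have heq := (Finset.sum_eq_sum_iff_of_le hle).1 (le_antisymm (Finset.sum_le_sum hle) hsum)
  exact fun i hi => mul_left_cancel₀ hi.ne' (heq i (Finset.mem_univ i))

lemma sq_sum_mul_mul_le (hv : ∀ i, 0 ≤ v i) (f g : ι → ℝ) :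
    (∑ i, v i * (f i * g i)) ^ 2 ≤ (∑ i, v i * f i ^ 2) * ∑ i, v i * g i ^ 2 :=
  Finset.sum_sq_le_sum_mul_sum_of_sq_le_mul _ (fun i _ => mul_nonneg (hv i) (sq_nonneg _))
    (fun i _ => mul_nonneg (hv i) (sq_nonneg _)) fun i _ => by
      rw [mul_pow, mul_pow]
      exact le_of_eq (by ring)

end WeightedSum

section LogInequality

/-- The chord of `s ↦ 2 * log (1 + s)` over `[-r, r]`. -/
lemma exists_slope_log_one_sub_sq_le {r : ℝ} (hr : r < 1) :
    ∃ l, ∀ s, |s| ≤ r → Real.log (1 - r ^ 2) + l * s ≤ 2 * Real.log (1 + s) ∧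
      (Real.log (1 - r ^ 2) + l * s = 2 * Real.log (1 + s) → |s| = r) := by
  refine ⟨(Real.log (1 + r) - Real.log (1 - r)) / r, fun s hs => ?_⟩
  have hr0 : 0 ≤ r := (abs_nonneg s).trans hs
  have hlog : Real.log (1 - r ^ 2) = Real.log (1 + r) + Real.log (1 - r) := by
    rw [← Real.log_mul (by linarith) (by linarith)]
    ring_nf
  rcases hs.eq_or_lt with hend | hint
  · refine ⟨le_of_eq ?_, fun _ => hend⟩
    have hcancel := div_mul_cancel_of_imp (a := Real.log (1 + r) - Real.log (1 - r)) (b := r)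
      fun h0 => by simp [h0]
    rcases (abs_eq hr0).1 hend with rfl | rfl
    · linarith
    · rw [← sub_eq_add_neg, mul_neg]
      linarith
  · have hr_pos : 0 < r := (abs_nonneg s).trans_lt hint
    obtain ⟨hlow, hupp⟩ := abs_lt.1 hint
    have hconc := strictConcaveOn_log_Ioi.2 (Set.mem_Ioi.2 (by linarith : 0 < 1 + r))
      (Set.mem_Ioi.2 (by linarith : 0 < 1 - r)) (by linarith)
      (div_pos (by linarith : 0 < r + s) (by linarith : 0 < 2 * r))
      (div_pos (by linarith : 0 < r - s) (by linarith : 0 < 2 * r)) (by field_simp; ring)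
    have hpoint : (r + s) / (2 * r) * (1 + r) + (r - s) / (2 * r) * (1 - r) = 1 + s := by
      field_simp
      ring
    simp only [smul_eq_mul, hpoint] at hconc
    have hchord : Real.log (1 - r ^ 2) + (Real.log (1 + r) - Real.log (1 - r)) / r * s =
        2 * ((r + s) / (2 * r) * Real.log (1 + r) + (r - s) / (2 * r) * Real.log (1 - r)) := by
      rw [hlog]
      field_simp
      ring
    have hlt : Real.log (1 - r ^ 2) + (Real.log (1 + r) - Real.log (1 - r)) / r * s <
        2 * Real.log (1 + s) := by linarith
    exact ⟨hlt.le, fun heq => absurd heq hlt.ne⟩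

lemma log_le_sub_one_and_eq_one_of_eq {y : ℝ} (hy : 0 < y) :
    Real.log y ≤ y - 1 ∧ (Real.log y = y - 1 → y = 1) :=
  ⟨Real.log_le_sub_one_of_pos hy, fun h => by
    by_contra hne
    exact (Real.log_lt_sub_one_of_pos hy hne).ne h⟩

variable {k ρ : ℝ}

lemma abs_lt_of_sq_le_mul (hk : 0 < k) (hρ : ρ < k) {μ : ℝ} (hμ : μ ^ 2 ≤ k * ρ) : |μ| < k :=
  abs_lt_of_sq_lt_sq (by nlinarith) hk.le

lemma log_le_log_div_of_sq_sub_le_mul (hk : 0 < k) (hρ : ρ < k) {μ T δ : ℝ} (hT : 0 < T)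
    (hδ : 0 < δ) (hμ : |μ| < k) (hsq : (k - μ) ^ 2 ≤ δ * T) :
    2 * Real.log (1 + -(μ / k)) - Real.log (1 - ρ / k) - Real.log (T / (k - ρ)) ≤
      Real.log (δ / k) := by
  have hkρ : 0 < k - ρ := sub_pos.2 hρ
  have hkμ : 0 < k - μ := sub_pos.2 (abs_lt.1 hμ).2
  have hμ_eq : 1 + -(μ / k) = (k - μ) / k := by field_simp; ring
  have hρ_eq : 1 - ρ / k = (k - ρ) / k := by field_simp
  have hlog := Real.log_le_log (by positivity) hsq
  rw [Real.log_mul hδ.ne' hT.ne', Real.log_pow, Nat.cast_ofNat] at hlog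
  rw [hμ_eq, hρ_eq, Real.log_div hkμ.ne' hk.ne', Real.log_div hkρ.ne' hk.ne',
    Real.log_div hT.ne' hkρ.ne', Real.log_div hδ.ne' hk.ne']
  linarith

lemma exists_slope_le_log_div (hk : 0 < k) (hρ0 : 0 ≤ ρ) (hρ : ρ < k) :
    ∃ l, ∀ μ T δ, 0 < T → 0 < δ → μ ^ 2 ≤ k * ρ → (k - μ) ^ 2 ≤ δ * T →
      l * μ + (1 - T / (k - ρ)) ≤ Real.log (δ / k) ∧
      (l * μ + (1 - T / (k - ρ)) = Real.log (δ / k) → μ ^ 2 = k * ρ ∧ T = k - ρ) := by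
  have hr : √(ρ / k) < 1 := by
    rwa [Real.sqrt_lt' one_pos, one_pow, div_lt_one hk]
  have hr_sq : √(ρ / k) ^ 2 = ρ / k := Real.sq_sqrt (by positivity)
  have hμ_sq : ∀ μ : ℝ, (-(μ / k)) ^ 2 * k ^ 2 = μ ^ 2 := fun μ => by field_simp
  obtain ⟨l, hl⟩ := exists_slope_log_one_sub_sq_le hr
  refine ⟨-(l / k), fun μ T δ hT hδ hμ hsq => ?_⟩
  have habs : |-(μ / k)| ≤ √(ρ / k) := Real.abs_le_sqrt <| by
    rw [neg_sq, div_pow, div_le_div_iff₀ (by positivity) hk]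
    nlinarith
  obtain ⟨hchord, hchord_eq⟩ := hl _ habs
  rw [hr_sq] at hchord hchord_eq
  have hlog := log_le_log_div_of_sq_sub_le_mul hk hρ hT hδ (abs_lt_of_sq_le_mul hk hρ hμ) hsq
  obtain ⟨htan, htan_eq⟩ := log_le_sub_one_and_eq_one_of_eq (div_pos hT (sub_pos.2 hρ))
  have hlμ : -(l / k) * μ = l * -(μ / k) := by ring
  rw [hlμ]
  refine ⟨by linarith, fun heq => ⟨?_, ?_⟩⟩
  · have hend := hchord_eq (by linarith)
    rw [← hμ_sq μ, ← sq_abs (-(μ / k)), hend, hr_sq]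
    field_simp
  · exact (div_eq_one_iff_eq (sub_pos.2 hρ).ne').1 (htan_eq (by linarith))

end LogInequality

section WeightedLogInequality

variable {ι : Type*} [Fintype ι] {v μ T δ : ι → ℝ} {k : ℝ}

lemma sum_mul_sq_lt_of_sum_mul_le (hv : ∀ i, 0 ≤ v i) (hv1 : ∑ i, v i = 1)
    (hT : ∀ i, 0 < v i → 0 < T i) (hsum : ∑ i, v i * T i ≤ k - ∑ i, v i * μ i ^ 2) :
    ∑ i, v i * μ i ^ 2 < k := by
  obtain ⟨j, -, hj⟩ : ∃ j ∈ Finset.univ, 0 < v j :=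
    Finset.exists_lt_of_sum_lt (by simp [hv1])
  have hterm : ∀ i, 0 ≤ v i * T i := fun i =>
    (hv i).eq_or_lt.elim (fun h0 => by simp [← h0]) fun hi => (mul_pos hi (hT i hi)).le
  have hpos : 0 < ∑ i, v i * T i := Finset.sum_pos' (fun i _ => hterm i)
    ⟨j, Finset.mem_univ j, mul_pos hj (hT j hj)⟩
  linarith

lemma pos_of_sq_sub_le_mul (hk : 0 < k) {ρ μ T δ : ℝ} (hρ : ρ < k) (hT : 0 < T)
    (hμ : μ ^ 2 ≤ k * ρ) (hsq : (k - μ) ^ 2 ≤ δ * T) : 0 < δ := by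
  have hkμ : 0 < k - μ := sub_pos.2 (abs_lt.1 (abs_lt_of_sq_le_mul hk hρ hμ)).2
  exact pos_of_mul_pos_left ((pow_pos hkμ 2).trans_le hsq) hT.le

lemma sum_mul_affine_nonneg (hv1 : ∑ i, v i = 1) (hμ0 : ∑ i, v i * μ i = 0) (hk : 0 < k)
    (hsum : ∑ i, v i * T i ≤ k) (l : ℝ) : 0 ≤ ∑ i, v i * (l * μ i + (1 - T i / k)) := by
  have hexpand : ∑ i, v i * (l * μ i + (1 - T i / k)) =
      l * ∑ i, v i * μ i + (∑ i, v i - (∑ i, v i * T i) / k) := by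
    simp only [Finset.mul_sum, Finset.sum_div, ← Finset.sum_sub_distrib,
      ← Finset.sum_add_distrib]
    exact Finset.sum_congr rfl fun i _ => by ring
  rw [hexpand, hμ0, hv1, mul_zero, zero_add, sub_nonneg, div_le_one hk]
  exact hsum

lemma sum_mul_log_div_nonneg_and_eq_of_eq_zero (hk : 0 < k) (hv : ∀ i, 0 ≤ v i) (hv1 : ∑ i, v i = 1)
    (hT : ∀ i, 0 < v i → 0 < T i) (hδ : ∀ i, 0 < v i → 0 < δ i)
    (hμ0 : ∑ i, v i * μ i = 0) (hμ : ∀ i, 0 < v i → μ i ^ 2 ≤ k * ∑ j, v j * μ j ^ 2)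
    (hsum : ∑ i, v i * T i ≤ k - ∑ i, v i * μ i ^ 2)
    (hsq : ∀ i, 0 < v i → (k - μ i) ^ 2 ≤ δ i * T i) :
    0 ≤ ∑ i, v i * Real.log (δ i / k) ∧
      (∑ i, v i * Real.log (δ i / k) = 0 → 1 < k → ∀ i, 0 < v i → δ i = k) := by
  set ρ := ∑ i, v i * μ i ^ 2
  have hρ0 : 0 ≤ ρ := Finset.sum_nonneg fun i _ => mul_nonneg (hv i) (sq_nonneg _)
  have hρ : ρ < k := sum_mul_sq_lt_of_sum_mul_le hv hv1 hT hsum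
  obtain ⟨l, hl⟩ := exists_slope_le_log_div hk hρ0 hρ
  have hle : ∀ i, 0 < v i → l * μ i + (1 - T i / (k - ρ)) ≤ Real.log (δ i / k) := fun i hi =>
    (hl _ _ _ (hT i hi) (hδ i hi) (hμ i hi) (hsq i hi)).1
  have hlower := sum_mul_affine_nonneg hv1 hμ0 (sub_pos.2 hρ) hsum l
  refine ⟨hlower.trans (sum_mul_le_sum_mul_of_support hv hle), fun hzero hk1 => ?_⟩
  have heq := eq_on_support_of_sum_mul_le_sum_mul hv hle (hzero.trans_le hlower)
  have hrigid : ∀ i, 0 < v i → μ i ^ 2 = k * ρ ∧ T i = k - ρ := fun i hi =>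
    (hl _ _ _ (hT i hi) (hδ i hi) (hμ i hi) (hsq i hi)).2 (heq i hi)
  have hρ_zero : ρ = 0 := by
    have hmean : k * ρ ≤ ρ := by
      simpa [← Finset.sum_mul, hv1] using
        sum_mul_le_sum_mul_of_support hv fun i hi => (hrigid i hi).1.ge
    nlinarith
  intro i hi
  obtain ⟨hμi, hTi⟩ := hrigid i hi
  have hlog := heq i hi
  rw [hTi, div_self (sub_pos.2 hρ).ne', sq_eq_zero_iff.1 (hμi.trans (by rw [hρ_zero, mul_zero])),
    mul_zero, sub_self, add_zero] at hlog
  exact (div_eq_one_iff_eq hk.ne').1 (Real.eq_one_of_pos_of_log_eq_zero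
    (div_pos (hδ i hi) hk) hlog.symm)

end WeightedLogInequality

section InformationMatrix

variable {n m : ℕ} {x : Fin n → Fin m → ℝ} {w : Fin n → ℝ}

lemma of_transpose_mul_diagonal_mul_of (b x : Fin n → Fin m → ℝ) (w : Fin n → ℝ) :
    (of b)ᵀ * diagonal w * of x = ∑ i, vecMulVec (w i • b i) (x i) := by
  ext p q
  rw [Matrix.mul_apply]
  simp only [Matrix.sum_apply, vecMulVec_apply, Pi.smul_apply, smul_eq_mul, mul_diagonal,
    transpose_apply, of_apply, mul_comm]

lemma Mmat_eq_transpose_mul_diagonal_mul (x : Fin n → Fin m → ℝ) (w : Fin n → ℝ) :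
    Mmat x w = (of x)ᵀ * diagonal w * of x := by
  simp only [Mmat, of_transpose_mul_diagonal_mul_of, smul_vecMulVec]

lemma posSemidef_Mmat (hw : ∀ i, 0 ≤ w i) : (Mmat x w).PosSemidef :=
  Mmat_eq_transpose_mul_diagonal_mul x w ▸
    posSemidef_transpose_mul_mul (PosSemidef.diagonal hw) (of x)

lemma posDef_Mmat_of_rank_eq (hrank : (of x).rank = m) (hw : ∀ i, 0 < w i) :
    (Mmat x w).PosDef := by
  have hinj : Function.Injective (of x).mulVec := by
    rw [mulVec_injective_iff, linearIndependent_iff_card_eq_finrank_span, Fintype.card_fin,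
      Set.finrank, ← rank_eq_finrank_span_cols, hrank]
  rw [Mmat_eq_transpose_mul_diagonal_mul]
  simpa only [conjTranspose_eq_transpose_of_trivial] using
    (PosDef.diagonal hw).conjTranspose_mul_mul_same hinj

lemma mem_OmegaPlus_of_mem_stdSimplex (hw : w ∈ stdSimplex ℝ (Fin n))
    (hdet : (Mmat x w).det ≠ 0) : w ∈ OmegaPlus x :=
  ⟨hw.1, hw.2, (posSemidef_Mmat hw.1).posDef_iff_det_ne_zero.2 hdet⟩

lemma mem_stdSimplex_of_mem_OmegaPlus (hw : w ∈ OmegaPlus x) : w ∈ stdSimplex ℝ (Fin n) :=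
  ⟨hw.1, hw.2.1⟩

lemma transpose_Mmat (x : Fin n → Fin m → ℝ) (w : Fin n → ℝ) : (Mmat x w)ᵀ = Mmat x w := by
  simp only [Mmat, transpose_sum, transpose_smul, transpose_vecMulVec]

lemma Mmat_mulVec (x : Fin n → Fin m → ℝ) (w : Fin n → ℝ) (q : Fin m → ℝ) :
    Mmat x w *ᵥ q = ∑ i, (w i * (x i ⬝ᵥ q)) • x i := by
  simp only [Mmat, sum_mulVec, smul_mulVec, vecMulVec_mulVec, op_smul_eq_smul, smul_smul]

lemma mul_Mmat (Q : Matrix (Fin m) (Fin m) ℝ) (x : Fin n → Fin m → ℝ) (w : Fin n → ℝ) :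
    Q * Mmat x w = ∑ i, vecMulVec (w i • Q *ᵥ x i) (x i) := by
  simp only [Mmat, Matrix.mul_sum, Matrix.mul_smul, mul_vecMulVec, smul_vecMulVec]

lemma trace_mul_Mmat (Q : Matrix (Fin m) (Fin m) ℝ) (x : Fin n → Fin m → ℝ) (w : Fin n → ℝ) :
    (Q * Mmat x w).trace = ∑ i, w i * (x i ⬝ᵥ Q *ᵥ x i) := by
  simp only [mul_Mmat, trace_sum, trace_vecMulVec, smul_dotProduct, smul_eq_mul,
    dotProduct_comm (Q *ᵥ _)]

lemma Mmat_add_smul_sub (x : Fin n → Fin m → ℝ) (v u : Fin n → ℝ) (ε : ℝ) :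
    Mmat x (v + ε • (u - v)) = Mmat x v + ε • (Mmat x u - Mmat x v) := by
  simp only [Mmat, Pi.add_apply, Pi.smul_apply, Pi.sub_apply, smul_eq_mul, add_smul, sub_smul,
    mul_smul, Finset.sum_add_distrib, Finset.sum_sub_distrib, Finset.smul_sum, smul_sub]

lemma continuous_Mmat (x : Fin n → Fin m → ℝ) : Continuous (Mmat x) :=
  continuous_finsetSum _ fun i _ => (continuous_apply i).smul continuous_const

lemma isUnit_det_Mmat (hw : w ∈ OmegaPlus x) : IsUnit (Mmat x w).det :=
  hw.2.2.det_pos.ne'.isUnit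

end InformationMatrix

section CenteredKernel

variable {n m : ℕ} {x : Fin n → Fin m → ℝ} {v w : Fin n → ℝ} {a : Fin m → ℝ}

/-- The reproducing kernel, evaluated at design points, of the affine functions with `w`-mean
zero under the inner product of `L²(w)`; its diagonal divided by `m - 1` is the factor applied by
Algorithm II. The subtracted `1` is the kernel of the constants. -/
noncomputable def centeredKernel (x : Fin n → Fin m → ℝ) (w : Fin n → ℝ) (i j : Fin n) : ℝ :=
  x i ⬝ᵥ (Mmat x w)⁻¹ *ᵥ x j - 1

lemma centeredKernel_comm (x : Fin n → Fin m → ℝ) (w : Fin n → ℝ) (i j : Fin n) :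
    centeredKernel x w i j = centeredKernel x w j i := by
  rw [centeredKernel, centeredKernel, dotProduct_mulVec, ← mulVec_transpose,
    transpose_nonsing_inv, transpose_Mmat, dotProduct_comm]

lemma sum_mul_dotProduct_inv_Mmat_mulVec (hw : w ∈ OmegaPlus x) (i : Fin n) (q : Fin m → ℝ) :
    ∑ j, w j * ((x i ⬝ᵥ (Mmat x w)⁻¹ *ᵥ x j) * (x j ⬝ᵥ q)) = x i ⬝ᵥ q := by
  have hq : (Mmat x w)⁻¹ *ᵥ Mmat x w *ᵥ q = q := by
    rw [mulVec_mulVec, nonsing_inv_mul _ (isUnit_det_Mmat hw), one_mulVec]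
  conv_rhs => rw [← hq, Mmat_mulVec, mulVec_sum, dotProduct_sum]
  simp only [mulVec_smul, dotProduct_smul, smul_eq_mul]
  exact Finset.sum_congr rfl fun j _ => by ring

lemma sum_mul_centeredKernel_mul_dotProduct (hw : w ∈ OmegaPlus x) (i : Fin n) (q : Fin m → ℝ) :
    ∑ j, w j * (centeredKernel x w i j * (x j ⬝ᵥ q)) = x i ⬝ᵥ q - ∑ j, w j * (x j ⬝ᵥ q) := by
  rw [← sum_mul_dotProduct_inv_Mmat_mulVec hw i q, ← Finset.sum_sub_distrib]
  exact Finset.sum_congr rfl fun j _ => by rw [centeredKernel]; ring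

lemma sum_mul_centeredKernel_eq_zero (ha : ∀ i, x i ⬝ᵥ a = 1) (hw : w ∈ OmegaPlus x)
    (i : Fin n) : ∑ j, w j * centeredKernel x w i j = 0 := by
  simpa [ha, hw.2.1] using sum_mul_centeredKernel_mul_dotProduct hw i a

lemma sum_mul_centeredKernel_mul_centeredKernel (ha : ∀ i, x i ⬝ᵥ a = 1) (hw : w ∈ OmegaPlus x)
    (v : Fin n → ℝ) (i l : Fin n) :
    ∑ j, w j * (centeredKernel x w i j * centeredKernel x v j l) =
      centeredKernel x v i l - ∑ j, w j * centeredKernel x v j l := by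
  have h := sum_mul_centeredKernel_mul_dotProduct hw i ((Mmat x v)⁻¹ *ᵥ x l - a)
  simpa only [dotProduct_sub, ha, centeredKernel] using h

lemma sum_mul_centeredKernel_mul_centeredKernel_same (ha : ∀ i, x i ⬝ᵥ a = 1)
    (hw : w ∈ OmegaPlus x) (i l : Fin n) :
    ∑ j, w j * (centeredKernel x w i j * centeredKernel x w j l) = centeredKernel x w i l := by
  have hzero : ∑ j, w j * centeredKernel x w j l = 0 := by
    simp only [centeredKernel_comm x w _ l, sum_mul_centeredKernel_eq_zero ha hw]
  rw [sum_mul_centeredKernel_mul_centeredKernel ha hw, hzero, sub_zero]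

lemma centeredKernel_self_eq_sum_sq (ha : ∀ i, x i ⬝ᵥ a = 1) (hw : w ∈ OmegaPlus x)
    (i : Fin n) : centeredKernel x w i i = ∑ j, w j * centeredKernel x w i j ^ 2 := by
  have h := sum_mul_centeredKernel_mul_centeredKernel_same ha hw i i
  simp only [centeredKernel_comm x w _ i] at h
  simpa only [sq] using h.symm

lemma centeredKernel_self_nonneg (ha : ∀ i, x i ⬝ᵥ a = 1) (hw : w ∈ OmegaPlus x) (i : Fin n) :
    0 ≤ centeredKernel x w i i :=
  centeredKernel_self_eq_sum_sq ha hw i ▸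
    Finset.sum_nonneg fun j _ => mul_nonneg (hw.1 j) (sq_nonneg _)

lemma trace_inv_Mmat_mul_Mmat (hw : ∑ i, w i = 1) (v : Fin n → ℝ) :
    ((Mmat x v)⁻¹ * Mmat x w).trace = ∑ i, w i * centeredKernel x v i i + 1 := by
  simp only [trace_mul_Mmat, centeredKernel, mul_sub, mul_one, Finset.sum_sub_distrib, hw,
    sub_add_cancel]

lemma sum_mul_centeredKernel_self (hw : w ∈ OmegaPlus x) :
    ∑ i, w i * centeredKernel x w i i = m - 1 := by
  have h := trace_inv_Mmat_mul_Mmat (x := x) hw.2.1 w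
  rw [nonsing_inv_mul _ (isUnit_det_Mmat hw), trace_one, Fintype.card_fin] at h
  exact eq_sub_of_add_eq h.symm

lemma continuousAt_centeredKernel (hw : w ∈ OmegaPlus x) (i j : Fin n) :
    ContinuousAt (fun u => centeredKernel x u i j) w := by
  have hinv : ContinuousAt (fun u => (Mmat x u)⁻¹) w := by
    refine (continuousAt_matrix_inv _ ?_).comp (continuous_Mmat x).continuousAt
    rw [Ring.inverse_eq_inv']
    exact continuousAt_inv₀ hw.2.2.det_pos.ne'
  have hform : Continuous fun A : Matrix (Fin m) (Fin m) ℝ => x i ⬝ᵥ A *ᵥ x j - 1 := by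
    fun_prop
  exact hform.continuousAt.comp hinv

end CenteredKernel

section Step

variable {n m : ℕ} {x : Fin n → Fin m → ℝ} {w : Fin n → ℝ} {a : Fin m → ℝ}

/-- One iteration of Algorithm II, as a map on weight vectors. -/
noncomputable def algorithmIIStep (x : Fin n → Fin m → ℝ) (w : Fin n → ℝ) (i : Fin n) : ℝ :=
  w i * centeredKernel x w i i / ((m : ℝ) - 1)

/-- The coefficient vector of the affine function with values `centeredKernel x w i j` at the
design points `x j`, where `a` is the coefficient vector of the constant function `1`. -/
noncomputable def kernelVec (x : Fin n → Fin m → ℝ) (w : Fin n → ℝ) (a : Fin m → ℝ)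
    (i : Fin n) : Fin m → ℝ :=
  (Mmat x w)⁻¹ *ᵥ x i - a

lemma algorithmIIStep_mem_stdSimplex (hm : 1 < m) (ha : ∀ i, x i ⬝ᵥ a = 1)
    (hw : w ∈ OmegaPlus x) : algorithmIIStep x w ∈ stdSimplex ℝ (Fin n) := by
  have hm1 : (0 : ℝ) < m - 1 := sub_pos.2 (Nat.one_lt_cast.2 hm)
  refine ⟨fun i => div_nonneg (mul_nonneg (hw.1 i) (centeredKernel_self_nonneg ha hw i)) hm1.le, ?_⟩
  simp only [algorithmIIStep, ← Finset.sum_div, sum_mul_centeredKernel_self hw,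
    div_self hm1.ne']

lemma dotProduct_Mmat_mulVec_comm (x : Fin n → Fin m → ℝ) (w : Fin n → ℝ) (p q : Fin m → ℝ) :
    p ⬝ᵥ Mmat x w *ᵥ q = q ⬝ᵥ Mmat x w *ᵥ p := by
  rw [dotProduct_mulVec, ← mulVec_transpose, transpose_Mmat, dotProduct_comm]

lemma dotProduct_Mmat_mulVec_const (ha : ∀ i, x i ⬝ᵥ a = 1) (hw : ∑ i, w i = 1) :
    a ⬝ᵥ Mmat x w *ᵥ a = 1 := by
  simp only [Mmat_mulVec, dotProduct_sum, dotProduct_smul, ha, dotProduct_comm a (x _),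
    smul_eq_mul, mul_one, hw]

lemma Mmat_mulVec_kernelVec (hw : w ∈ OmegaPlus x) (i : Fin n) :
    Mmat x w *ᵥ kernelVec x w a i = x i - Mmat x w *ᵥ a := by
  rw [kernelVec, mulVec_sub, mulVec_mulVec, mul_nonsing_inv _ (isUnit_det_Mmat hw), one_mulVec]

lemma const_dotProduct_Mmat_mulVec_kernelVec (ha : ∀ i, x i ⬝ᵥ a = 1) (hw : w ∈ OmegaPlus x)
    (i : Fin n) : a ⬝ᵥ Mmat x w *ᵥ kernelVec x w a i = 0 := by
  rw [Mmat_mulVec_kernelVec hw, dotProduct_sub, dotProduct_Mmat_mulVec_const ha hw.2.1,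
    dotProduct_comm, ha, sub_self]

lemma kernelVec_dotProduct_Mmat_mulVec_kernelVec (ha : ∀ i, x i ⬝ᵥ a = 1)
    (hw : w ∈ OmegaPlus x) (i : Fin n) :
    kernelVec x w a i ⬝ᵥ Mmat x w *ᵥ kernelVec x w a i = centeredKernel x w i i := by
  rw [Mmat_mulVec_kernelVec hw, dotProduct_sub, dotProduct_Mmat_mulVec_comm,
    const_dotProduct_Mmat_mulVec_kernelVec ha hw, sub_zero, dotProduct_comm, kernelVec,
    dotProduct_sub, ha, centeredKernel]

lemma kernelVec_eq_zero_of_centeredKernel_eq_zero (ha : ∀ i, x i ⬝ᵥ a = 1)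
    (hw : w ∈ OmegaPlus x) {i : Fin n} (hi : centeredKernel x w i i = 0) :
    kernelVec x w a i = 0 := by
  by_contra hne
  have hpos := hw.2.2.dotProduct_mulVec_pos hne
  rw [star_trivial, kernelVec_dotProduct_Mmat_mulVec_kernelVec ha hw, hi] at hpos
  exact hpos.false

/-- The directions `b i` that certify one step of Algorithm II: the Gram matrices of `b` against
`x` and of `b` against itself, both weighted by the new weights, bound the new determinant from
below by `det_mul_sq_det_le_det`. -/
noncomputable def stepVec (x : Fin n → Fin m → ℝ) (w : Fin n → ℝ) (a : Fin m → ℝ)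
    (i : Fin n) : Fin m → ℝ :=
  a + (((m : ℝ) - 1) / centeredKernel x w i i) • kernelVec x w a i

lemma algorithmIIStep_smul_stepVec (hm : 1 < m) (ha : ∀ i, x i ⬝ᵥ a = 1) (hw : w ∈ OmegaPlus x)
    (i : Fin n) :
    algorithmIIStep x w i • stepVec x w a i =
      algorithmIIStep x w i • a + w i • kernelVec x w a i := by
  have hm1 : (m : ℝ) - 1 ≠ 0 := (sub_pos.2 (Nat.one_lt_cast.2 hm)).ne'
  rw [stepVec, smul_add, smul_smul, algorithmIIStep]
  by_cases hi : centeredKernel x w i i = 0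
  · rw [kernelVec_eq_zero_of_centeredKernel_eq_zero ha hw hi, smul_zero, smul_zero]
  · rw [div_mul_div_cancel₀ hm1, mul_div_cancel_right₀ _ hi]

lemma algorithmIIStep_mul_stepVec_dotProduct_le (hm : 1 < m) (ha : ∀ i, x i ⬝ᵥ a = 1)
    (hw : w ∈ OmegaPlus x) (i : Fin n) :
    algorithmIIStep x w i * (stepVec x w a i ⬝ᵥ Mmat x w *ᵥ stepVec x w a i) ≤
      algorithmIIStep x w i + w i * (m - 1) := by
  have hm1 : (m : ℝ) - 1 > 0 := sub_pos.2 (Nat.one_lt_cast.2 hm)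
  have hself : stepVec x w a i ⬝ᵥ Mmat x w *ᵥ stepVec x w a i =
      1 + (((m : ℝ) - 1) / centeredKernel x w i i) ^ 2 * centeredKernel x w i i := by
    simp only [stepVec, mulVec_add, mulVec_smul, add_dotProduct, dotProduct_add, smul_dotProduct,
      dotProduct_smul, smul_eq_mul, dotProduct_Mmat_mulVec_const ha hw.2.1,
      const_dotProduct_Mmat_mulVec_kernelVec ha hw,
      dotProduct_Mmat_mulVec_comm x w (kernelVec x w a i) a,
      kernelVec_dotProduct_Mmat_mulVec_kernelVec ha hw]
    ring
  rw [hself, algorithmIIStep]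
  by_cases hi : centeredKernel x w i i = 0
  · simpa [hi] using mul_nonneg (hw.1 i) hm1.le
  · refine le_of_eq ?_
    field_simp

lemma sum_vecMulVec_smul_left (a : Fin m → ℝ) (u : Fin n → ℝ) (x : Fin n → Fin m → ℝ) :
    ∑ i, vecMulVec (u i • a) (x i) = vecMulVec a (∑ i, u i • x i) := by
  ext p q
  simp only [Matrix.sum_apply, vecMulVec_apply, Pi.smul_apply, smul_eq_mul, Finset.sum_apply,
    Finset.mul_sum, mul_comm (u _), mul_assoc]

lemma sum_vecMulVec_kernelVec (hw : w ∈ OmegaPlus x) :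
    ∑ i, vecMulVec (w i • kernelVec x w a i) (x i) = 1 - vecMulVec a (∑ i, w i • x i) := by
  have hone : ∑ i, vecMulVec (w i • (Mmat x w)⁻¹ *ᵥ x i) (x i) = 1 := by
    rw [← mul_Mmat, nonsing_inv_mul _ (isUnit_det_Mmat hw)]
  simp only [kernelVec, smul_sub, sub_vecMulVec, Finset.sum_sub_distrib, hone,
    sum_vecMulVec_smul_left]

lemma det_stepVec_transpose_mul_diagonal_mul (hm : 1 < m) (ha : ∀ i, x i ⬝ᵥ a = 1)
    (hw : w ∈ OmegaPlus x) :
    ((of (stepVec x w a))ᵀ * diagonal (algorithmIIStep x w) * of x).det = 1 := by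
  set w' := algorithmIIStep x w
  have hw' : ∑ i, w' i = 1 := (algorithmIIStep_mem_stdSimplex hm ha hw).2
  have hmean : ∀ u : Fin n → ℝ, ∑ i, u i = 1 → (∑ i, u i • x i) ⬝ᵥ a = 1 := fun u hu => by
    simp only [sum_dotProduct, smul_dotProduct, ha, smul_eq_mul, mul_one, hu]
  have hrank_one : ∑ i, vecMulVec (w' i • stepVec x w a i) (x i) =
      1 + vecMulVec a (∑ i, w' i • x i - ∑ i, w i • x i) := by
    simp only [w', algorithmIIStep_smul_stepVec hm ha hw, add_vecMulVec, Finset.sum_add_distrib,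
      sum_vecMulVec_kernelVec hw, vecMulVec_sub, sum_vecMulVec_smul_left]
    abel
  rw [of_transpose_mul_diagonal_mul_of, hrank_one, vecMulVec_eq Unit,
    det_one_add_replicateCol_mul_replicateRow, sub_dotProduct, hmean w' hw', hmean w hw.2.1,
    sub_self, add_zero]

lemma trace_Mmat_mul_stepVec_le (hm : 1 < m) (ha : ∀ i, x i ⬝ᵥ a = 1) (hw : w ∈ OmegaPlus x) :
    (Mmat x w * Mmat (stepVec x w a) (algorithmIIStep x w)).trace ≤ m := by
  rw [trace_mul_Mmat]
  refine (Finset.sum_le_sum fun i _ =>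
    algorithmIIStep_mul_stepVec_dotProduct_le hm ha hw i).trans_eq ?_
  rw [Finset.sum_add_distrib, ← Finset.sum_mul, (algorithmIIStep_mem_stdSimplex hm ha hw).2,
    hw.2.1]
  ring

lemma algorithmIIStep_mem_OmegaPlus (hm : 1 < m) (ha : ∀ i, x i ⬝ᵥ a = 1)
    (hw : w ∈ OmegaPlus x) : algorithmIIStep x w ∈ OmegaPlus x := by
  have hsimplex := algorithmIIStep_mem_stdSimplex hm ha hw
  refine ⟨hsimplex.1, hsimplex.2, ?_⟩
  rw [Mmat_eq_transpose_mul_diagonal_mul]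
  refine posDef_transpose_mul_mul_of_det_ne_zero (B := of (stepVec x w a))
    (PosSemidef.diagonal hsimplex.1) ?_
  rw [det_stepVec_transpose_mul_diagonal_mul hm ha hw]
  exact one_ne_zero

lemma det_Mmat_le_det_Mmat_algorithmIIStep (hm : 1 < m) (ha : ∀ i, x i ⬝ᵥ a = 1)
    (hw : w ∈ OmegaPlus x) : (Mmat x w).det ≤ (Mmat x (algorithmIIStep x w)).det := by
  have hstep := algorithmIIStep_mem_OmegaPlus hm ha hw
  have hposDef := hstep.2.2
  have htrace := trace_Mmat_mul_stepVec_le hm ha hw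
  rw [Mmat_eq_transpose_mul_diagonal_mul] at hposDef
  rw [Mmat_eq_transpose_mul_diagonal_mul (stepVec x w a)] at htrace
  have hdet := det_mul_sq_det_le_det hw.2.2.posSemidef (PosSemidef.diagonal hstep.1) hposDef
    (htrace.trans_eq (by rw [Fintype.card_fin]))
  rwa [det_stepVec_transpose_mul_diagonal_mul hm ha hw, one_pow, mul_one,
    ← Mmat_eq_transpose_mul_diagonal_mul] at hdet

end Step

section Optimality

variable {n m : ℕ} {x : Fin n → Fin m → ℝ} {u v : Fin n → ℝ}

lemma det_Mmat_le_of_sum_mul_centeredKernel_self_le (hv : v ∈ OmegaPlus x)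
    (hu : u ∈ stdSimplex ℝ (Fin n)) (h : ∑ i, u i * centeredKernel x v i i ≤ m - 1) :
    (Mmat x u).det ≤ (Mmat x v).det := by
  have htrace : ((Mmat x v)⁻¹ * Mmat x u).trace ≤ Fintype.card (Fin m) := by
    rw [trace_inv_Mmat_mul_Mmat hu.2, Fintype.card_fin]
    linarith
  have hdet := det_mul_det_le_one_of_trace_mul_le_card hv.2.2.inv.posSemidef
    (posSemidef_Mmat hu.1) htrace
  rwa [det_nonsing_inv, Ring.inverse_eq_inv', inv_mul_le_one₀ hv.2.2.det_pos] at hdet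

lemma sum_mul_centeredKernel_self_le_of_isMaxOn (hv : v ∈ OmegaPlus x)
    (hmax : IsMaxOn (fun u => (Mmat x u).det) (stdSimplex ℝ (Fin n)) v)
    (hu : u ∈ stdSimplex ℝ (Fin n)) : ∑ i, u i * centeredKernel x v i i ≤ m - 1 := by
  have hinv : (Mmat x v)⁻¹ * Mmat x v = 1 := nonsing_inv_mul _ (isUnit_det_Mmat hv)
  have htrace : ((Mmat x v)⁻¹ * (Mmat x u - Mmat x v)).trace ≤ 0 := by
    refine trace_nonpos_of_det_one_add_smul_le_one fun ε hε => ?_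
    have hsegment : 1 + ε • ((Mmat x v)⁻¹ * (Mmat x u - Mmat x v)) =
        (Mmat x v)⁻¹ * Mmat x (v + ε • (u - v)) := by
      rw [Mmat_add_smul_sub, Matrix.mul_add, hinv, Matrix.mul_smul]
    rw [hsegment, det_mul, det_nonsing_inv, Ring.inverse_eq_inv', inv_mul_le_one₀ hv.2.2.det_pos]
    exact hmax ((convex_stdSimplex ℝ (Fin n)).add_smul_sub_mem ⟨hv.1, hv.2.1⟩ hu
      (Set.Ioo_subset_Icc_self hε))
  rw [Matrix.mul_sub, trace_sub, trace_inv_Mmat_mul_Mmat hu.2, hinv, trace_one,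
    Fintype.card_fin] at htrace
  linarith

lemma centeredKernel_self_le_of_isMaxOn (hv : v ∈ OmegaPlus x)
    (hmax : IsMaxOn (fun u => (Mmat x u).det) (stdSimplex ℝ (Fin n)) v) (i : Fin n) :
    centeredKernel x v i i ≤ m - 1 := by
  simpa [Pi.single_apply] using
    sum_mul_centeredKernel_self_le_of_isMaxOn hv hmax (single_mem_stdSimplex ℝ i)

lemma centeredKernel_self_eq_of_pos (hv : v ∈ OmegaPlus x)
    (hle : ∀ i, centeredKernel x v i i ≤ m - 1) {i : Fin n} (hi : 0 < v i) :
    centeredKernel x v i i = m - 1 := by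
  refine eq_on_support_of_sum_mul_le_sum_mul hv.1 (fun i _ => hle i) ?_ i hi
  rw [sum_mul_centeredKernel_self hv, ← Finset.sum_mul, hv.2.1, one_mul]

lemma exists_mem_OmegaPlus_isMaxOn {w : Fin n → ℝ} (hw : w ∈ OmegaPlus x) :
    ∃ v ∈ OmegaPlus x, IsMaxOn (fun u => (Mmat x u).det) (stdSimplex ℝ (Fin n)) v := by
  have hw_simplex := mem_stdSimplex_of_mem_OmegaPlus hw
  obtain ⟨v, hv, hmax⟩ := (isCompact_stdSimplex ℝ (Fin n)).exists_isMaxOn ⟨w, hw_simplex⟩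
    (continuous_Mmat x).matrix_det.continuousOn
  have hdet : 0 < (Mmat x v).det := hw.2.2.det_pos.trans_le (hmax hw_simplex)
  exact ⟨v, mem_OmegaPlus_of_mem_stdSimplex hv hdet.ne', hmax⟩

end Optimality

section KernelMean

variable {n m : ℕ} {x : Fin n → Fin m → ℝ} {v w : Fin n → ℝ} {a : Fin m → ℝ}

/-- The `w`-mean of the affine function `centeredKernel x v i`. -/
noncomputable def kernelMean (x : Fin n → Fin m → ℝ) (v w : Fin n → ℝ) (i : Fin n) : ℝ :=
  ∑ j, w j * centeredKernel x v i j

/-- The `w`-variance of the affine function `centeredKernel x v i`. -/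
noncomputable def kernelVar (x : Fin n → Fin m → ℝ) (v w : Fin n → ℝ) (i : Fin n) : ℝ :=
  ∑ j, w j * (centeredKernel x v i j - kernelMean x v w i) ^ 2

lemma sum_mul_kernelMean_eq_zero (ha : ∀ i, x i ⬝ᵥ a = 1) (hv : v ∈ OmegaPlus x)
    (w : Fin n → ℝ) : ∑ i, v i * kernelMean x v w i = 0 := by
  simp only [kernelMean, Finset.mul_sum]
  rw [Finset.sum_comm]
  refine Finset.sum_eq_zero fun j _ => ?_
  simp only [mul_left_comm (v _), ← Finset.mul_sum, centeredKernel_comm x v _ j,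
    sum_mul_centeredKernel_eq_zero ha hv, mul_zero]

lemma sum_mul_centeredKernel_mul_kernelMean (ha : ∀ i, x i ⬝ᵥ a = 1) (hv : v ∈ OmegaPlus x)
    (w : Fin n → ℝ) (i : Fin n) :
    ∑ l, v l * (centeredKernel x v i l * kernelMean x v w l) = kernelMean x v w i := by
  simp only [kernelMean, Finset.mul_sum]
  rw [Finset.sum_comm]
  refine Finset.sum_congr rfl fun j _ => ?_
  rw [centeredKernel_comm x v i j, ← sum_mul_centeredKernel_mul_centeredKernel_same ha hv j i,
    Finset.mul_sum]
  refine Finset.sum_congr rfl fun l _ => ?_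
  rw [centeredKernel_comm x v i l, centeredKernel_comm x v l j]
  ring

lemma sq_kernelMean_le (ha : ∀ i, x i ⬝ᵥ a = 1) (hv : v ∈ OmegaPlus x) (w : Fin n → ℝ)
    (i : Fin n) :
    kernelMean x v w i ^ 2 ≤ centeredKernel x v i i * ∑ l, v l * kernelMean x v w l ^ 2 := by
  have h := sq_sum_mul_mul_le hv.1 (centeredKernel x v i) (kernelMean x v w)
  rwa [sum_mul_centeredKernel_mul_kernelMean ha hv, ← centeredKernel_self_eq_sum_sq ha hv] at h

lemma kernelVar_eq_sum_sq_sub (hw : ∑ i, w i = 1) (v : Fin n → ℝ) (i : Fin n) :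
    kernelVar x v w i = ∑ j, w j * centeredKernel x v i j ^ 2 - kernelMean x v w i ^ 2 := by
  have hexpand : kernelVar x v w i = ∑ j, w j * centeredKernel x v i j ^ 2 -
      2 * kernelMean x v w i * ∑ j, w j * centeredKernel x v i j +
        (∑ j, w j) * kernelMean x v w i ^ 2 := by
    simp only [kernelVar, Finset.mul_sum, Finset.sum_mul, ← Finset.sum_sub_distrib,
      ← Finset.sum_add_distrib]
    exact Finset.sum_congr rfl fun j _ => by ring
  rw [hexpand, ← kernelMean, hw]
  ring

lemma sum_mul_kernelVar (ha : ∀ i, x i ⬝ᵥ a = 1) (hv : v ∈ OmegaPlus x) (hw : ∑ i, w i = 1) :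
    ∑ i, v i * kernelVar x v w i =
      ∑ j, w j * centeredKernel x v j j - ∑ i, v i * kernelMean x v w i ^ 2 := by
  simp only [kernelVar_eq_sum_sq_sub hw, mul_sub, Finset.sum_sub_distrib,
    centeredKernel_self_eq_sum_sq ha hv, Finset.mul_sum]
  rw [Finset.sum_comm]
  simp only [centeredKernel_comm x v, mul_left_comm (v _)]

lemma sq_centeredKernel_self_sub_kernelMean_le (ha : ∀ i, x i ⬝ᵥ a = 1) (hw : w ∈ OmegaPlus x)
    (v : Fin n → ℝ) (i : Fin n) :
    (centeredKernel x v i i - kernelMean x v w i) ^ 2 ≤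
      centeredKernel x w i i * kernelVar x v w i := by
  have hinner : ∑ j, w j * (centeredKernel x w i j *
      (centeredKernel x v i j - kernelMean x v w i)) =
        centeredKernel x v i i - kernelMean x v w i := by
    have hproj := sum_mul_centeredKernel_mul_centeredKernel ha hw v i i
    simp only [centeredKernel_comm x v _ i] at hproj
    simp only [mul_sub, Finset.sum_sub_distrib, hproj]
    rw [← kernelMean]
    simp only [← mul_assoc, ← Finset.sum_mul, sum_mul_centeredKernel_eq_zero ha hw, zero_mul,
      sub_zero]
  rw [← hinner, kernelVar, centeredKernel_self_eq_sum_sq ha hw i]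
  exact sq_sum_mul_mul_le hw.1 _ _

lemma kernelVar_eq_dotProduct_Mmat_mulVec (ha : ∀ i, x i ⬝ᵥ a = 1) (v w : Fin n → ℝ)
    (i : Fin n) :
    kernelVar x v w i = (kernelVec x v a i - kernelMean x v w i • a) ⬝ᵥ
      Mmat x w *ᵥ (kernelVec x v a i - kernelMean x v w i • a) := by
  set q := kernelVec x v a i - kernelMean x v w i • a with hq
  have heval : ∀ j, x j ⬝ᵥ q = centeredKernel x v i j - kernelMean x v w i := fun j => by
    rw [hq, centeredKernel_comm, dotProduct_sub, dotProduct_smul, kernelVec, dotProduct_sub, ha,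
      smul_eq_mul, mul_one, centeredKernel]
  simp only [kernelVar, Mmat_mulVec, dotProduct_sum, dotProduct_smul, dotProduct_comm q (x _),
    heval, smul_eq_mul]
  exact Finset.sum_congr rfl fun j _ => by ring

lemma kernelVar_pos (ha : ∀ i, x i ⬝ᵥ a = 1) (hv : v ∈ OmegaPlus x) (hw : w ∈ OmegaPlus x)
    {i : Fin n} (hi : centeredKernel x v i i ≠ 0) : 0 < kernelVar x v w i := by
  rw [kernelVar_eq_dotProduct_Mmat_mulVec ha]
  refine hw.2.2.dotProduct_mulVec_pos fun hzero => hi ?_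
  have hvec := sub_eq_zero.1 hzero
  rw [← kernelVec_dotProduct_Mmat_mulVec_kernelVec ha hv, hvec, smul_dotProduct, ← hvec,
    const_dotProduct_Mmat_mulVec_kernelVec ha hv, smul_zero]

end KernelMean

section LogGain

variable {n m : ℕ} {x : Fin n → Fin m → ℝ} {v w : Fin n → ℝ} {a : Fin m → ℝ}

/-- The increment of `∑ i, v i * log (w i)` over one step of Algorithm II from `w`. -/
noncomputable def logGain (x : Fin n → Fin m → ℝ) (v w : Fin n → ℝ) : ℝ :=
  ∑ i, v i * Real.log (centeredKernel x w i i / ((m : ℝ) - 1))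

lemma sum_mul_kernelVar_le (ha : ∀ i, x i ⬝ᵥ a = 1) (hv : v ∈ OmegaPlus x)
    (hle : ∀ i, centeredKernel x v i i ≤ m - 1) (hw : w ∈ stdSimplex ℝ (Fin n)) :
    ∑ i, v i * kernelVar x v w i ≤ (m - 1) - ∑ i, v i * kernelMean x v w i ^ 2 := by
  rw [sum_mul_kernelVar ha hv hw.2, sub_le_sub_iff_right]
  refine (sum_mul_le_sum_mul_of_support hw.1 fun i _ => hle i).trans_eq ?_
  rw [← Finset.sum_mul, hw.2, one_mul]

lemma kernelVar_pos_of_pos (hm : 1 < m) (ha : ∀ i, x i ⬝ᵥ a = 1) (hv : v ∈ OmegaPlus x)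
    (hle : ∀ i, centeredKernel x v i i ≤ m - 1) (hw : w ∈ OmegaPlus x) {i : Fin n}
    (hi : 0 < v i) : 0 < kernelVar x v w i :=
  kernelVar_pos ha hv hw <|
    centeredKernel_self_eq_of_pos hv hle hi ▸ (sub_pos.2 (Nat.one_lt_cast.2 hm)).ne'

lemma sq_kernelMean_le_of_pos (ha : ∀ i, x i ⬝ᵥ a = 1) (hv : v ∈ OmegaPlus x)
    (hle : ∀ i, centeredKernel x v i i ≤ m - 1) (w : Fin n → ℝ) {i : Fin n} (hi : 0 < v i) :
    kernelMean x v w i ^ 2 ≤ (m - 1) * ∑ l, v l * kernelMean x v w l ^ 2 :=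
  centeredKernel_self_eq_of_pos hv hle hi ▸ sq_kernelMean_le ha hv w i

lemma sq_sub_kernelMean_le_of_pos (ha : ∀ i, x i ⬝ᵥ a = 1) (hv : v ∈ OmegaPlus x)
    (hle : ∀ i, centeredKernel x v i i ≤ m - 1) (hw : w ∈ OmegaPlus x) {i : Fin n}
    (hi : 0 < v i) :
    ((m - 1) - kernelMean x v w i) ^ 2 ≤ centeredKernel x w i i * kernelVar x v w i :=
  centeredKernel_self_eq_of_pos hv hle hi ▸ sq_centeredKernel_self_sub_kernelMean_le ha hw v i

lemma centeredKernel_self_pos_of_pos (hm : 1 < m) (ha : ∀ i, x i ⬝ᵥ a = 1)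
    (hv : v ∈ OmegaPlus x) (hle : ∀ i, centeredKernel x v i i ≤ m - 1) (hw : w ∈ OmegaPlus x)
    {i : Fin n} (hi : 0 < v i) : 0 < centeredKernel x w i i := by
  have hvar := fun j (hj : 0 < v j) => kernelVar_pos_of_pos hm ha hv hle hw hj
  have hlt := sum_mul_sq_lt_of_sum_mul_le hv.1 hv.2.1 hvar
    (sum_mul_kernelVar_le ha hv hle (mem_stdSimplex_of_mem_OmegaPlus hw))
  exact pos_of_sq_sub_le_mul (sub_pos.2 (Nat.one_lt_cast.2 hm)) hlt (hvar i hi)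
    (sq_kernelMean_le_of_pos ha hv hle w hi) (sq_sub_kernelMean_le_of_pos ha hv hle hw hi)

lemma logGain_nonneg_and_centeredKernel_self_eq_of_logGain_eq_zero (hm : 1 < m)
    (ha : ∀ i, x i ⬝ᵥ a = 1) (hv : v ∈ OmegaPlus x)
    (hle : ∀ i, centeredKernel x v i i ≤ m - 1) (hw : w ∈ OmegaPlus x) :
    0 ≤ logGain x v w ∧ (logGain x v w = 0 → (1 : ℝ) < m - 1 →
      ∀ i, 0 < v i → centeredKernel x w i i = m - 1) :=
  sum_mul_log_div_nonneg_and_eq_of_eq_zero (sub_pos.2 (Nat.one_lt_cast.2 hm)) hv.1 hv.2.1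
    (fun _ hi => kernelVar_pos_of_pos hm ha hv hle hw hi)
    (fun _ hi => centeredKernel_self_pos_of_pos hm ha hv hle hw hi)
    (sum_mul_kernelMean_eq_zero ha hv w) (fun _ hi => sq_kernelMean_le_of_pos ha hv hle w hi)
    (sum_mul_kernelVar_le ha hv hle (mem_stdSimplex_of_mem_OmegaPlus hw))
    fun _ hi => sq_sub_kernelMean_le_of_pos ha hv hle hw hi

lemma det_Mmat_le_of_logGain_eq_zero (hm : 2 < m) (ha : ∀ i, x i ⬝ᵥ a = 1)
    (hv : v ∈ OmegaPlus x) (hle : ∀ i, centeredKernel x v i i ≤ m - 1) (hw : w ∈ OmegaPlus x)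
    (hgain : logGain x v w = 0) : (Mmat x v).det ≤ (Mmat x w).det := by
  have hm2 : (2 : ℝ) < m := Nat.ofNat_lt_cast.2 hm
  have heq := (logGain_nonneg_and_centeredKernel_self_eq_of_logGain_eq_zero (by omega) ha hv hle
    hw).2 hgain (by linarith)
  refine det_Mmat_le_of_sum_mul_centeredKernel_self_le hw (mem_stdSimplex_of_mem_OmegaPlus hv) ?_
  refine (sum_mul_le_sum_mul_of_support hv.1 fun i hi => (heq i hi).le).trans_eq ?_
  rw [← Finset.sum_mul, hv.2.1, one_mul]

lemma continuousAt_logGain (hv : ∀ i, 0 ≤ v i) (hw : w ∈ OmegaPlus x) (hm : m ≠ 1)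
    (hpos : ∀ i, 0 < v i → centeredKernel x w i i ≠ 0) : ContinuousAt (logGain x v) w := by
  have hm1 : (m : ℝ) - 1 ≠ 0 := sub_ne_zero.2 (Nat.cast_ne_one.2 hm)
  refine tendsto_finsetSum _ fun i _ => ?_
  rcases (hv i).eq_or_lt with hzero | hi
  · simpa only [← hzero, zero_mul] using tendsto_const_nhds
  · exact (((continuousAt_centeredKernel hw i i).div_const _).log
      (div_ne_zero (hpos i hi) hm1)).const_mul _

lemma sum_mul_log_algorithmIIStep (hm : m ≠ 1) (hv : ∀ i, 0 ≤ v i)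
    (hw : ∀ i, 0 < v i → w i ≠ 0) (hpos : ∀ i, 0 < v i → centeredKernel x w i i ≠ 0) :
    ∑ i, v i * Real.log (algorithmIIStep x w i) =
      ∑ i, v i * Real.log (w i) + logGain x v w := by
  have hm1 : (m : ℝ) - 1 ≠ 0 := sub_ne_zero.2 (Nat.cast_ne_one.2 hm)
  rw [logGain, ← Finset.sum_add_distrib]
  refine Finset.sum_congr rfl fun i _ => ?_
  rcases (hv i).eq_or_lt with hzero | hi
  · simp only [← hzero, zero_mul, add_zero]
  · rw [algorithmIIStep, mul_div_assoc, Real.log_mul (hw i hi) (div_ne_zero (hpos i hi) hm1),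
      mul_add]

lemma sum_mul_log_nonpos (hv : ∀ i, 0 ≤ v i) (hw : w ∈ stdSimplex ℝ (Fin n)) :
    ∑ i, v i * Real.log (w i) ≤ 0 :=
  Finset.sum_nonpos fun i _ => mul_nonpos_of_nonneg_of_nonpos (hv i) <|
    Real.log_nonpos (hw.1 i) (hw.2 ▸ Finset.single_le_sum (fun j _ => hw.1 j) (Finset.mem_univ i))

end LogGain

section Limit

lemma eq_of_mapClusterPt_of_tendsto {α X Y : Type*} [TopologicalSpace X] [TopologicalSpace Y]
    [T2Space Y] {l : Filter α} {u : α → X} {p : X} {f : X → Y} {y : Y} (hp : MapClusterPt p l u)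
    (hf : ContinuousAt f p) (hy : Tendsto (f ∘ u) l (nhds y)) : f p = y :=
  have hfp : MapClusterPt (f p) l (f ∘ u) := hp.tendsto_comp hf
  eq_of_nhds_neBot (hfp.neBot.mono (inf_le_inf_left _ hy))

lemma tendsto_sub_succ_of_monotone {u : ℕ → ℝ} (hu : Monotone u) (hbdd : BddAbove (Set.range u)) :
    Tendsto (fun t => u (t + 1) - u t) atTop (nhds 0) := by
  have hlim := tendsto_atTop_ciSup hu hbdd
  simpa only [sub_self, Function.comp_def] using (hlim.comp (tendsto_add_atTop_nat 1)).sub hlim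

variable {n m : ℕ} {x : Fin n → Fin m → ℝ} {v : Fin n → ℝ} {a : Fin m → ℝ}
  {w : ℕ → Fin n → ℝ} {p : Fin n → ℝ}

lemma mem_OmegaPlus_of_orbit (hm : 1 < m) (ha : ∀ i, x i ⬝ᵥ a = 1) (hw0 : w 0 ∈ OmegaPlus x)
    (hw : ∀ t, w (t + 1) = algorithmIIStep x (w t)) : ∀ t, w t ∈ OmegaPlus x
  | 0 => hw0
  | t + 1 => hw t ▸ algorithmIIStep_mem_OmegaPlus hm ha (mem_OmegaPlus_of_orbit hm ha hw0 hw t)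

lemma monotone_det_Mmat_orbit (hm : 1 < m) (ha : ∀ i, x i ⬝ᵥ a = 1)
    (hw0 : w 0 ∈ OmegaPlus x) (hw : ∀ t, w (t + 1) = algorithmIIStep x (w t)) :
    Monotone fun t => (Mmat x (w t)).det :=
  monotone_nat_of_le_succ fun t => by
    rw [hw t]
    exact det_Mmat_le_det_Mmat_algorithmIIStep hm ha (mem_OmegaPlus_of_orbit hm ha hw0 hw t)

lemma mem_stdSimplex_of_mapClusterPt (hw : ∀ t, w t ∈ OmegaPlus x)
    (hp : MapClusterPt p atTop w) : p ∈ stdSimplex ℝ (Fin n) :=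
  (isClosed_stdSimplex ℝ (Fin n)).mem_of_mapClusterPt hp
    (Eventually.of_forall fun t => mem_stdSimplex_of_mem_OmegaPlus (hw t))

lemma mem_OmegaPlus_of_mapClusterPt (hw : ∀ t, w t ∈ OmegaPlus x)
    (hmono : Monotone fun t => (Mmat x (w t)).det) (hp : MapClusterPt p atTop w) :
    p ∈ OmegaPlus x := by
  have hclosed : IsClosed {u | (Mmat x (w 0)).det ≤ (Mmat x u).det} :=
    isClosed_le continuous_const (continuous_Mmat x).matrix_det
  have hdet : (Mmat x (w 0)).det ≤ (Mmat x p).det := hclosed.mem_of_mapClusterPt hp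
    (Eventually.of_forall fun t => hmono t.zero_le)
  exact mem_OmegaPlus_of_mem_stdSimplex (mem_stdSimplex_of_mapClusterPt hw hp)
    ((hw 0).2.2.det_pos.trans_le hdet).ne'

lemma tendsto_logGain_orbit (hm : 1 < m) (ha : ∀ i, x i ⬝ᵥ a = 1) (hv : v ∈ OmegaPlus x)
    (hle : ∀ i, centeredKernel x v i i ≤ m - 1) (hw0 : w 0 ∈ OmegaPlus x)
    (hpos : ∀ i, 0 < v i → 0 < w 0 i) (hw : ∀ t, w (t + 1) = algorithmIIStep x (w t)) :
    Tendsto (fun t => logGain x v (w t)) atTop (nhds 0) := by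
  have hmem := mem_OmegaPlus_of_orbit hm ha hw0 hw
  have hkernel : ∀ t i, 0 < v i → 0 < centeredKernel x (w t) i i := fun t i hi =>
    centeredKernel_self_pos_of_pos hm ha hv hle (hmem t) hi
  have hweight : ∀ t i, 0 < v i → 0 < w t i := fun t i hi => by
    induction t with
    | zero => exact hpos i hi
    | succ t ih =>
      rw [hw t]
      exact div_pos (mul_pos ih (hkernel t i hi)) (sub_pos.2 (Nat.one_lt_cast.2 hm))
  set L : ℕ → ℝ := fun t => ∑ i, v i * Real.log (w t i)
  have hsucc : ∀ t, L (t + 1) = L t + logGain x v (w t) := fun t => by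
    rw [← sum_mul_log_algorithmIIStep hm.ne' hv.1 (fun i hi => (hweight t i hi).ne')
      fun i hi => (hkernel t i hi).ne', ← hw t]
  have hmono : Monotone L := monotone_nat_of_le_succ fun t =>
    (hsucc t).symm ▸ le_add_of_nonneg_right
      (logGain_nonneg_and_centeredKernel_self_eq_of_logGain_eq_zero hm ha hv hle (hmem t)).1
  have hbdd : BddAbove (Set.range L) := ⟨0, Set.forall_mem_range.2 fun t =>
    sum_mul_log_nonpos hv.1 (mem_stdSimplex_of_mem_OmegaPlus (hmem t))⟩
  exact (tendsto_sub_succ_of_monotone hmono hbdd).congr fun t =>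
    sub_eq_iff_eq_add'.2 (hsucc t)

lemma det_Mmat_le_of_mapClusterPt_orbit (hm : 2 < m) (ha : ∀ i, x i ⬝ᵥ a = 1)
    (hv : v ∈ OmegaPlus x) (hle : ∀ i, centeredKernel x v i i ≤ m - 1)
    (hw0 : w 0 ∈ OmegaPlus x) (hpos : ∀ i, 0 < v i → 0 < w 0 i)
    (hw : ∀ t, w (t + 1) = algorithmIIStep x (w t)) (hp : MapClusterPt p atTop w)
    (hp_mem : p ∈ OmegaPlus x) : (Mmat x v).det ≤ (Mmat x p).det := by
  have hm1 : 1 < m := by omega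
  refine det_Mmat_le_of_logGain_eq_zero hm ha hv hle hp_mem ?_
  refine eq_of_mapClusterPt_of_tendsto hp (continuousAt_logGain hv.1 hp_mem hm1.ne' fun i hi => ?_)
    (tendsto_logGain_orbit hm1 ha hv hle hw0 hpos hw)
  exact (centeredKernel_self_pos_of_pos hm1 ha hv hle hp_mem hi).ne'

lemma exists_mapClusterPt_of_mem_OmegaPlus (hw : ∀ t, w t ∈ OmegaPlus x) :
    ∃ p, MapClusterPt p atTop w := by
  obtain ⟨p, -, hp⟩ := (isCompact_stdSimplex ℝ (Fin n)).exists_mapClusterPt (f := atTop) (u := w)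
    (tendsto_principal.2 (Eventually.of_forall fun t => mem_stdSimplex_of_mem_OmegaPlus (hw t)))
  exact ⟨p, hp⟩

lemma tendsto_sSup_of_monotone_of_mapClusterPt {X : Type*} [TopologicalSpace X] {f : X → ℝ}
    {s : Set X} {u : ℕ → X} {p : X} (hf : ContinuousAt f p) (hps : p ∈ s) (hmax : IsMaxOn f s p)
    (hu : ∀ t, u t ∈ s) (hmono : Monotone (f ∘ u)) (hp : MapClusterPt p atTop u) :
    Tendsto (f ∘ u) atTop (nhds (sSup (f '' s))) := by
  have hlim := tendsto_atTop_ciSup hmono ⟨f p, Set.forall_mem_range.2 fun t => hmax (hu t)⟩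
  have hgreatest : IsGreatest (f '' s) (f p) :=
    ⟨Set.mem_image_of_mem f hps, Set.forall_mem_image.2 hmax⟩
  rwa [hgreatest.csSup_eq, eq_of_mapClusterPt_of_tendsto hp hf hlim]

end Limit

theorem stmt_2_general {n m : ℕ} (hm : 3 ≤ m) (x : Fin n → Fin m → ℝ) (a : Fin m → ℝ)
    (ha : ∀ i, x i ⬝ᵥ a = 1) (hrank : (Matrix.of x).rank = m) (w : ℕ → Fin n → ℝ)
    (hw0pos : ∀ i, 0 < w 0 i) (hw0sum : ∑ i, w 0 i = 1)
    (hupd : ∀ t i, w (t + 1) i =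
      w t i * ((x i ⬝ᵥ (Mmat x (w t))⁻¹ *ᵥ x i) - 1) / ((m : ℝ) - 1)) :
    (∀ p : Fin n → ℝ, MapClusterPt p atTop w →
      p ∈ OmegaPlus x ∧ ∀ v ∈ OmegaPlus x, (Mmat x v).det ≤ (Mmat x p).det) ∧
    Monotone (fun t => (Mmat x (w t)).det) ∧
    Tendsto (fun t => (Mmat x (w t)).det) atTop
      (nhds (sSup ((fun v => (Mmat x v).det) '' OmegaPlus x))) := by
  have hm1 : 1 < m := by omega
  have hw0 : w 0 ∈ OmegaPlus x :=
    ⟨fun i => (hw0pos i).le, hw0sum, posDef_Mmat_of_rank_eq hrank hw0pos⟩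
  have hstep : ∀ t, w (t + 1) = algorithmIIStep x (w t) := fun t => funext (hupd t)
  have hmem := mem_OmegaPlus_of_orbit hm1 ha hw0 hstep
  have hmono := monotone_det_Mmat_orbit hm1 ha hw0 hstep
  obtain ⟨v, hv, hmax⟩ := exists_mem_OmegaPlus_isMaxOn hw0
  have hcluster : ∀ p, MapClusterPt p atTop w →
      p ∈ OmegaPlus x ∧ ∀ u ∈ OmegaPlus x, (Mmat x u).det ≤ (Mmat x p).det := fun p hp => by
    have hp_mem := mem_OmegaPlus_of_mapClusterPt hmem hmono hp
    exact ⟨hp_mem, fun u hu => (hmax (mem_stdSimplex_of_mem_OmegaPlus hu)).trans <|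
      det_Mmat_le_of_mapClusterPt_orbit hm ha hv (centeredKernel_self_le_of_isMaxOn hv hmax) hw0
        (fun i _ => hw0pos i) hstep hp hp_mem⟩
  obtain ⟨p, hp⟩ := exists_mapClusterPt_of_mem_OmegaPlus hmem
  exact ⟨hcluster, hmono, tendsto_sSup_of_monotone_of_mapClusterPt
    (continuous_Mmat x).matrix_det.continuousAt (hcluster p hp).1 (hcluster p hp).2 hmem hmono hp⟩

/-- Convergence of Algorithm II: if `m ≥ 3`, each design point has first coordinate 1, the
design matrix has full rank `m`, and `w^(t)` is generated by the Algorithm II update starting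
from `w^(0) ∈ Ω`, then every limit point of `w^(t)` is a global maximizer of `det M` over
`Ω₊`, and `det M(w^(t))` increases monotonically to `sup_{v ∈ Ω₊} det M(v)`. -/
theorem stmt_2 {n m : ℕ} (hm : 3 ≤ m) (hnm : m ≤ n)
    (x : Fin n → Fin m → ℝ)
    (hx1 : ∀ i, x i ⟨0, by omega⟩ = 1)
    (hrank : (Matrix.of x).rank = m)
    (w : ℕ → Fin n → ℝ)
    (hw0pos : ∀ i, 0 < w 0 i) (hw0sum : ∑ i, w 0 i = 1)
    (hupd : ∀ t i, w (t + 1) i =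
      w t i * ((x i ⬝ᵥ (Mmat x (w t))⁻¹ *ᵥ x i) - 1) / ((m : ℝ) - 1)) :
    (∀ p : Fin n → ℝ, MapClusterPt p atTop w →
      p ∈ OmegaPlus x ∧ ∀ v ∈ OmegaPlus x, (Mmat x v).det ≤ (Mmat x p).det) ∧
    Monotone (fun t => (Mmat x (w t)).det) ∧
    Tendsto (fun t => (Mmat x (w t)).det) atTop
      (nhds (sSup ((fun v => (Mmat x v).det) '' OmegaPlus x))) := by
  exact stmt_2_general hm x (Pi.single ⟨0, by omega⟩ 1)
    (fun i => (dotProduct_single_one _ _).trans (hx1 i)) hrank w hw0pos hw0sum hupd
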